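/- Let γ = ∑_{i=1}^∞ 1/a_i. For every ε > 0 there exist a number of agents n, a set of goods M = {1,…,m}, an additive valuation v over goods on M, and entitlements b_1,…,b_n > 0 with ∑_i b_i = 1, such that when all n agents have the same valuation v, no finitely supported probability distribution over allocations of M gives every agent i expected value E[v(S_i)] ≥ (1/γ + ε)·b̂_i·v(M). Hence for every ε > 0, the ex-ante share (1/γ + ε)·PS-hat is not feasible ex-ante for additive valuations over goods with arbitrary entitlements. -/

import Mathlib

/-!
A single item of value `1` defeats every share whose guarantees add up to more than `1`: whatever
the lottery, the expected values of the agents sum to `1`. It therefore suffices to find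
entitlements whose unit upper bounds `b̂_i` sum to nearly `γ`.

With `n` agents, indexed from `0` as in `aseq`, take `b_i` slightly above `1/(a_i + 1)`, so
that `b̂_i = 1/a_i` (`floor_inv_entitlement`). This is affordable, since the recursion for `a` telescopes to
`∑_{i<n} 1/(a_i + 1) = 1 - 1/a_n` (`sum_inv_aseq_add_one`), leaving a positive slack to share. The
unit upper bounds then add up to the `n`-th partial sum of the series `γ`. The series converges,
so for large `n` that sum exceeds `(1/γ + ε)⁻¹ < γ`, and the guarantees sum to more than `1`.
-/

open Finset

noncomputable section

/-- Value of a bundle under an additive valuation. -/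
def bundleVal {m : ℕ} (v : Fin m → ℝ) (S : Finset (Fin m)) : ℝ := ∑ j ∈ S, v j

/-- A tuple of bundles partitions the items: pairwise disjoint and covering all items. -/
def IsPartition {n m : ℕ} (A : Fin n → Finset (Fin m)) : Prop :=
  (∀ i j : Fin n, i ≠ j → Disjoint (A i) (A j)) ∧ ∀ e : Fin m, ∃ i, e ∈ A i

/-- The sequence a_1 = 1, a_{k+1} = a_k(a_k + 1) (0-indexed: `aseq 0 = 1`). -/
def aseq : ℕ → ℕ
  | 0 => 1
  | k + 1 => aseq k * (aseq k + 1)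

/-- γ = ∑_{i=1}^∞ 1/a_i ≈ 1.69103. -/
def gammaConst : ℝ := ∑' i : ℕ, (1 : ℝ) / (aseq i : ℝ)

lemma aseq_pos (k : ℕ) : 0 < aseq k := by
  induction k with
  | zero => simp [aseq]
  | succ k ih => simp only [aseq]; positivity

lemma aseq_mono : Monotone aseq :=
  monotone_nat_of_le_succ fun k => by
    simp only [aseq]
    nlinarith [aseq_pos k]

/-- The recursion makes `1/(a+1) = 1/a - 1/a'`, where `a'` is the successor of `a` in the
sequence, so the sum telescopes. -/
lemma sum_inv_aseq_add_one (n : ℕ) :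
    ∑ i ∈ range n, (1 : ℝ) / ((aseq i : ℝ) + 1) = 1 - 1 / (aseq n : ℝ) := by
  induction n with
  | zero => simp [aseq]
  | succ n ih =>
    have h : (0 : ℝ) < aseq n := by exact_mod_cast aseq_pos n
    rw [sum_range_succ, ih]
    simp only [aseq, Nat.cast_mul, Nat.cast_add, Nat.cast_one]
    field_simp
    ring

lemma summable_inv_aseq : Summable fun i : ℕ => (1 : ℝ) / (aseq i : ℝ) := by
  refine summable_of_sum_range_le (c := 2) (fun i => by positivity) fun n => ?_
  have hn : (0 : ℝ) < aseq n := by exact_mod_cast aseq_pos n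
  calc ∑ i ∈ range n, (1 : ℝ) / (aseq i : ℝ)
      ≤ ∑ i ∈ range n, 2 * ((1 : ℝ) / ((aseq i : ℝ) + 1)) := by
        refine sum_le_sum fun i _ => ?_
        have h : (1 : ℝ) ≤ aseq i := by exact_mod_cast aseq_pos i
        rw [mul_one_div, div_le_div_iff₀ (by linarith) (by linarith)]
        linarith
    _ = 2 * (1 - 1 / (aseq n : ℝ)) := by rw [← mul_sum, sum_inv_aseq_add_one]
    _ ≤ 2 := by
        have : 0 < 1 / (aseq n : ℝ) := by positivity
        linarith

lemma gammaConst_pos : 0 < gammaConst :=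
  summable_inv_aseq.tsum_pos (fun i => by positivity) 0 (by simp [aseq])

/-- The entitlement of agent `i` among `n`: the number `1/(a_i+1)`, plus an equal share of the
slack `1/a_n` that makes the entitlements add up to `1`. -/
def entitlement (n i : ℕ) : ℝ := 1 / ((aseq i : ℝ) + 1) + 1 / ((n : ℝ) * aseq n)

lemma entitlement_pos (n i : ℕ) : 0 < entitlement n i := by
  unfold entitlement
  positivity

lemma sum_entitlement (n : ℕ) (hn : 0 < n) : ∑ i : Fin n, entitlement n i = 1 := by
  have hn' : (0 : ℝ) < n := by exact_mod_cast hn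
  have ha : (0 : ℝ) < aseq n := by exact_mod_cast aseq_pos n
  rw [Fin.sum_univ_eq_sum_range (entitlement n) n]
  simp only [entitlement]
  rw [sum_add_distrib, sum_inv_aseq_add_one, sum_const, card_range, nsmul_eq_mul]
  field_simp
  ring

/-- The entitlement lies in the interval `(1/(a_i+1), 1/a_i]`, because the share of the slack is
at most `1/a_{i+1} = 1/a_i - 1/(a_i+1)`. -/
lemma floor_inv_entitlement {n i : ℕ} (hi : i < n) : ⌊1 / entitlement n i⌋₊ = aseq i := by
  have hpos := entitlement_pos n i
  have hn : (1 : ℝ) ≤ n := by exact_mod_cast (by omega : 1 ≤ n)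
  have ha : (0 : ℝ) < aseq i := by exact_mod_cast aseq_pos i
  have han : (0 : ℝ) < aseq n := by exact_mod_cast aseq_pos n
  have hle : ((aseq i : ℝ) * (aseq i + 1)) ≤ aseq n := by
    exact_mod_cast (aseq_mono (Nat.succ_le_of_lt hi) : aseq (i + 1) ≤ aseq n)
  rw [Nat.floor_eq_iff (by positivity)]
  constructor
  · rw [le_div_iff₀ hpos, ← le_div_iff₀' ha]
    have h1 : 1 / ((n : ℝ) * aseq n) ≤ 1 / ((aseq i : ℝ) * (aseq i + 1)) :=
      one_div_le_one_div_of_le (by positivity) (by nlinarith)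
    have h2 : 1 / ((aseq i : ℝ) + 1) + 1 / ((aseq i : ℝ) * (aseq i + 1)) = 1 / (aseq i : ℝ) := by
      field_simp
    unfold entitlement
    linarith
  · rw [div_lt_iff₀ hpos, ← div_lt_iff₀' (by positivity)]
    unfold entitlement
    have : 0 < 1 / ((n : ℝ) * aseq n) := by positivity
    linarith

/-- In a partition the bundle values add up to the value of all items. -/
lemma sum_bundleVal {n m : ℕ} (v : Fin m → ℝ) {A : Fin n → Finset (Fin m)}
    (hA : IsPartition A) : ∑ i, bundleVal v (A i) = bundleVal v univ := by
  unfold bundleVal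
  rw [← sum_biUnion fun i _ j _ hij => hA.1 i j hij]
  congr 1
  ext e
  simpa using hA.2 e

/-- for every ε > 0 the ex-ante share (1/γ + ε)·PS-hat is not feasible
ex-ante for additive valuations over goods with arbitrary entitlements: there is an
instance (all agents sharing one additive valuation) such that no finitely supported
distribution over allocations gives every agent i expected value at least
(1/γ + ε)·b̂_i·v(M), where b̂ = 1/⌊1/b⌋. -/
theorem inv_gamma_plus_eps_PShat_exante_infeasible (ε : ℝ) (hε : 0 < ε) :
    ∃ (n m : ℕ) (v : Fin m → ℝ) (b : Fin n → ℝ),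
      (∀ j, 0 ≤ v j) ∧ (∀ i, 0 < b i) ∧ (∑ i, b i = 1) ∧
      ∀ p : (Fin n → Finset (Fin m)) → ℝ,
        (∀ A, 0 ≤ p A) → (∑ A : Fin n → Finset (Fin m), p A = 1) →
        (∀ A, p A ≠ 0 → IsPartition A) →
        ∃ i, (∑ A : Fin n → Finset (Fin m), p A * bundleVal v (A i)) <
          (gammaConst⁻¹ + ε) * ((⌊1 / b i⌋₊ : ℝ))⁻¹ * bundleVal v Finset.univ := by
  have hγ := gammaConst_pos
  have hlim := summable_inv_aseq.hasSum.tendsto_sum_nat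
  have hlt : (gammaConst⁻¹ + ε)⁻¹ < gammaConst :=
    inv_lt_of_inv_lt₀ hγ (by linarith)
  obtain ⟨n, hn, hn0⟩ :=
    ((hlim.eventually_const_lt hlt).and (Filter.eventually_gt_atTop 0)).exists
  refine ⟨n, 1, fun _ => 1, fun i => entitlement n i, fun _ => zero_le_one,
    fun i => entitlement_pos n i, sum_entitlement n hn0, fun p _ hp1 hpart => ?_⟩
  have htot : bundleVal (fun _ : Fin 1 => (1 : ℝ)) univ = 1 := by simp [bundleVal]
  by_contra! hcon
  -- The expected values of all agents add up to the value of the single item.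
  have hsum : ∑ i, ∑ A : Fin n → Finset (Fin 1), p A * bundleVal (fun _ => 1) (A i) = 1 := by
    rw [sum_comm]
    refine Eq.trans (sum_congr rfl fun A _ => ?_) hp1
    rw [← mul_sum]
    by_cases h : p A = 0
    · simp [h]
    · rw [sum_bundleVal _ (hpart A h), htot, mul_one]
  have hge : (gammaConst⁻¹ + ε) * ∑ i ∈ range n, (1 : ℝ) / (aseq i : ℝ) ≤ 1 := by
    rw [← Fin.sum_univ_eq_sum_range (fun i => (1 : ℝ) / (aseq i : ℝ)) n, mul_sum]
    refine (sum_le_sum fun i _ => ?_).trans_eq hsum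
    have h := hcon i
    rw [htot, mul_one, floor_inv_entitlement i.2] at h
    rwa [one_div]
  have hc : 0 < gammaConst⁻¹ + ε := by positivity
  rw [inv_lt_iff_one_lt_mul₀' hc] at hn
  linarith
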